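/- arXiv:2405.16181 — 4 statements merged into one kernel-verified Lean document; each statement's English description precedes it below -/
import Mathlib

section
/- Let d ≥ 1 and let J, J' : ℝ^d → ℝ be N-times continuously differentiable (N ∈ ℕ). Fix x ∈ ℝ^d, a radius ξ > 0, and a perturbation δ ∈ ℝ^d with ‖δ‖ ≤ ξ. Then the adversarial transferability gap satisfies |ATG(x, δ)| ≤ Σ_{n=0}^{N} (‖δ‖^n / n!) · [ R̄^{(n)}_ξ(x; J) + C_n(x) + R̄^{(n)}_ξ(x; J') ] + |R_N(x, δ; J') − R_N(x, δ; J)|. -/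
/-!
Subtracting the two order-`N` Taylor expansions at `x` writes the transferability gap as
`∑ (n!)⁻¹ (D^n J'(x) − D^n J(x))[δ, …, δ]` plus the difference of the remainders, and the operator norm
bounds the `n`-th summand by `‖δ‖^n / n! · ‖D^n J'(x) − D^n J(x)‖`. For every `x'` the triangle inequality
through `D^n J(x')` and `D^n J'(x')` bounds `‖D^n J'(x) − D^n J(x)‖` by three distances; averaging over
the ball (`norm_sub_le_averages`) turns these into the two flatness terms and the cross-model discrepancy.
-/

open MeasureTheory Metric

/-- ξ-radius n-th order average-case flatness:
`R̄^{(n)}_ξ(x; J) = E_{x' ~ Unif(B_ξ(x))} ‖D^n J(x') − D^n J(x)‖`. -/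
noncomputable def avgFlat (d n : ℕ) (ξ : ℝ)
    (J : EuclideanSpace ℝ (Fin d) → ℝ) (x : EuclideanSpace ℝ (Fin d)) : ℝ :=
  ⨍ x' in closedBall x ξ, ‖iteratedFDeriv ℝ n J x' - iteratedFDeriv ℝ n J x‖

/-- Cross-model gradient discrepancy:
`C_n(x) = E_{x' ~ Unif(B_ξ(x))} ‖D^n J'(x') − D^n J(x')‖`. -/
noncomputable def crossDisc (d n : ℕ) (ξ : ℝ)
    (J J' : EuclideanSpace ℝ (Fin d) → ℝ) (x : EuclideanSpace ℝ (Fin d)) : ℝ :=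
  ⨍ x' in closedBall x ξ, ‖iteratedFDeriv ℝ n J' x' - iteratedFDeriv ℝ n J x'‖

/-- Adversarial transferability gap `ATG(x, δ) = J'(x + δ) − J(x + δ)`. -/
noncomputable def ATG (d : ℕ) (J J' : EuclideanSpace ℝ (Fin d) → ℝ)
    (x δ : EuclideanSpace ℝ (Fin d)) : ℝ :=
  J' (x + δ) - J (x + δ)

/-- Order-N Taylor remainder of `J` at `x`:
`R_N(x, δ; J) = J(x + δ) − Σ_{n=0}^{N} (1/n!) D^n J(x)[δ, …, δ]`. -/
noncomputable def taylorRem (d N : ℕ) (J : EuclideanSpace ℝ (Fin d) → ℝ)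
    (x δ : EuclideanSpace ℝ (Fin d)) : ℝ :=
  J (x + δ) - ∑ n ∈ Finset.range (N + 1),
    ((n.factorial : ℝ))⁻¹ * iteratedFDeriv ℝ n J x (fun _ => δ)

/-- The triangle inequality through `f y` and `g y`, averaged over `y ∈ s`. -/
theorem norm_sub_le_averages {X F : Type*} [TopologicalSpace X] [T2Space X] [MeasurableSpace X]
    [OpensMeasurableSpace X] [NormedAddCommGroup F] {μ : Measure X} [IsFiniteMeasureOnCompacts μ]
    {s : Set X} (hs : IsCompact s) (hμ : μ s ≠ 0) {f g : X → F} (hf : Continuous f)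
    (hg : Continuous g) (x : X) :
    ‖g x - f x‖ ≤ (⨍ y in s, ‖f y - f x‖ ∂μ) + (⨍ y in s, ‖g y - f y‖ ∂μ) +
      (⨍ y in s, ‖g y - g x‖ ∂μ) := by
  have hfin : μ s ≠ ⊤ := hs.measure_lt_top.ne
  have i1 : IntegrableOn (fun y => ‖f y - f x‖) s μ :=
    (hf.sub continuous_const).norm.continuousOn.integrableOn_compact hs
  have i2 : IntegrableOn (fun y => ‖g y - f y‖) s μ :=
    (hg.sub hf).norm.continuousOn.integrableOn_compact hs
  have i3 : IntegrableOn (fun y => ‖g y - g x‖) s μ :=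
    (hg.sub continuous_const).norm.continuousOn.integrableOn_compact hs
  have i12 : IntegrableOn (fun y => ‖f y - f x‖ + ‖g y - f y‖) s μ := i1.add i2
  have tri : ∀ y, ‖g x - f x‖ ≤ ‖f y - f x‖ + ‖g y - f y‖ + ‖g y - g x‖ := fun y => by
    calc ‖g x - f x‖ = ‖(f y - f x) + (g y - f y) - (g y - g x)‖ := by congr 1; abel
      _ ≤ ‖(f y - f x) + (g y - f y)‖ + ‖g y - g x‖ := norm_sub_le _ _
      _ ≤ _ := by gcongr; exact norm_add_le _ _
  have key : ∫ _ in s, ‖g x - f x‖ ∂μ ≤ ∫ y in s, (‖f y - f x‖ + ‖g y - f y‖ + ‖g y - g x‖) ∂μ :=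
    integral_mono (integrableOn_const hfin) (i12.add i3) tri
  rw [integral_add i12 i3, integral_add i1 i2] at key
  -- The hypotheses on `μ s` make the average of a constant equal to that constant.
  rw [← setAverage_const hμ hfin ‖g x - f x‖]
  simp only [setAverage_eq, smul_eq_mul, ← mul_add]
  exact mul_le_mul_of_nonneg_left key (by positivity)

/-- Flatness-based bound on the adversarial transferability gap. -/
theorem flatness_transferability_bound
    {d : ℕ} (hd : 1 ≤ d) (N : ℕ)
    (J J' : EuclideanSpace ℝ (Fin d) → ℝ)
    (hJ : ContDiff ℝ N J) (hJ' : ContDiff ℝ N J')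
    (x : EuclideanSpace ℝ (Fin d)) (ξ : ℝ) (hξ : 0 < ξ)
    (δ : EuclideanSpace ℝ (Fin d)) (hδ : ‖δ‖ ≤ ξ) :
    |ATG d J J' x δ| ≤
      (∑ n ∈ Finset.range (N + 1),
        (‖δ‖ ^ n / (n.factorial : ℝ)) *
          (avgFlat d n ξ J x + crossDisc d n ξ J J' x + avgFlat d n ξ J' x)) +
      |taylorRem d N J' x δ - taylorRem d N J x δ| := by
  set T : ℕ → ℝ := fun n =>
    (n.factorial : ℝ)⁻¹ * (iteratedFDeriv ℝ n J' x - iteratedFDeriv ℝ n J x) (fun _ => δ) with hT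
  have hdecomp : ATG d J J' x δ =
      ∑ n ∈ Finset.range (N + 1), T n + (taylorRem d N J' x δ - taylorRem d N J x δ) := by
    simp only [hT, ATG, taylorRem, sub_apply, mul_sub,
      Finset.sum_sub_distrib]
    ring
  rw [hdecomp]
  refine (abs_add_le _ _).trans (add_le_add_left ?_ _)
  refine (Finset.abs_sum_le_sum_abs _ _).trans (Finset.sum_le_sum fun n hn => ?_)
  have hnN : (n : WithTop ℕ∞) ≤ N := by exact_mod_cast Finset.mem_range_succ_iff.mp hn
  have hop : |(iteratedFDeriv ℝ n J' x - iteratedFDeriv ℝ n J x) (fun _ => δ)| ≤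
      ‖iteratedFDeriv ℝ n J' x - iteratedFDeriv ℝ n J x‖ * ‖δ‖ ^ n := by
    simpa using (iteratedFDeriv ℝ n J' x - iteratedFDeriv ℝ n J x).le_opNorm (fun _ => δ)
  have hμ : volume (closedBall x ξ) ≠ 0 := (measure_closedBall_pos volume x hξ).ne'
  have havg := norm_sub_le_averages (isCompact_closedBall x ξ) hμ
    (hJ.continuous_iteratedFDeriv hnN) (hJ'.continuous_iteratedFDeriv hnN) x
  calc |T n| = (n.factorial : ℝ)⁻¹ *
        |(iteratedFDeriv ℝ n J' x - iteratedFDeriv ℝ n J x) (fun _ => δ)| := by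
        rw [hT, abs_mul, abs_of_nonneg (by positivity)]
    _ ≤ (n.factorial : ℝ)⁻¹ *
        (‖iteratedFDeriv ℝ n J' x - iteratedFDeriv ℝ n J x‖ * ‖δ‖ ^ n) := by gcongr
    _ = ‖δ‖ ^ n / (n.factorial : ℝ) * ‖iteratedFDeriv ℝ n J' x - iteratedFDeriv ℝ n J x‖ := by
        ring
    _ ≤ _ := mul_le_mul_of_nonneg_left havg (by positivity)
end

section
/- Let d ≥ 1 and let J, J' : ℝ^d → ℝ be continuous. Fix x ∈ ℝ^d, ξ > 0, and δ ∈ ℝ^d with ‖δ‖ ≤ ξ. Then |ATG(x, δ)| ≤ R̄^{(0)}_ξ(x; J) + C_0(x) + R̄^{(0)}_ξ(x; J') + |R_0(x, δ; J') − R_0(x, δ; J)|, i.e., the zeroth-order (N = 0) instance of the flatness-based transferability bound holds, where R_0(x, δ; J) = J(x + δ) − J(x). -/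
/-!
Writing the gap at `x + δ` as the gap at `x` plus the difference of the two remainders, only
`|J' x - J x|` has to be bounded. For every `y` the triangle inequality gives
`|J' x - J x| ≤ |J y - J x| + |J' y - J y| + |J' y - J' x|`, and some `y` in the ball makes the
right-hand side at most its average (`exists_le_setAverage`), which is the sum of the three
averages because each integrand is continuous on a compact ball of positive finite volume.
-/

open MeasureTheory Metric

/-- ξ-radius zeroth-order average-case flatness:
`R̄^{(0)}_ξ(x; J) = E_{x' ~ Unif(B_ξ(x))} |J(x') − J(x)|`. -/
noncomputable def avgFlat0 (d : ℕ) (ξ : ℝ)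
    (J : EuclideanSpace ℝ (Fin d) → ℝ) (x : EuclideanSpace ℝ (Fin d)) : ℝ :=
  ⨍ x' in closedBall x ξ, |J x' - J x|

/-- Zeroth-order cross-model discrepancy:
`C_0(x) = E_{x' ~ Unif(B_ξ(x))} |J'(x') − J(x')|`. -/
noncomputable def crossDisc0 (d : ℕ) (ξ : ℝ)
    (J J' : EuclideanSpace ℝ (Fin d) → ℝ) (x : EuclideanSpace ℝ (Fin d)) : ℝ :=
  ⨍ x' in closedBall x ξ, |J' x' - J x'|

/-- Zeroth-order (N = 0) instance of the flatness-based transferability bound,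
where `R_0(x, δ; J) = J(x + δ) − J(x)`. -/
theorem flatness_transferability_bound_order_zero
    {d : ℕ} (hd : 1 ≤ d)
    (J J' : EuclideanSpace ℝ (Fin d) → ℝ)
    (hJ : Continuous J) (hJ' : Continuous J')
    (x : EuclideanSpace ℝ (Fin d)) (ξ : ℝ) (hξ : 0 < ξ)
    (δ : EuclideanSpace ℝ (Fin d)) (hδ : ‖δ‖ ≤ ξ) :
    |ATG d J J' x δ| ≤
      avgFlat0 d ξ J x + crossDisc0 d ξ J J' x + avgFlat0 d ξ J' x +
        |(J' (x + δ) - J' x) - (J (x + δ) - J x)| := by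
  have key : |J' x - J x| ≤
      avgFlat0 d ξ J x + crossDisc0 d ξ J J' x + avgFlat0 d ξ J' x := by
    have hc : ∀ f : EuclideanSpace ℝ (Fin d) → ℝ, Continuous f →
        IntegrableOn f (closedBall x ξ) volume := fun f hf =>
      hf.continuousOn.integrableOn_compact (isCompact_closedBall x ξ)
    have h1 := hc (fun y => |J y - J x|) (by fun_prop)
    have h2 := hc (fun y => |J' y - J y|) (by fun_prop)
    have h3 := hc (fun y => |J' y - J' x|) (by fun_prop)
    have h0 : volume (closedBall x ξ) ≠ 0 := (measure_closedBall_pos volume x hξ).ne'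
    have ht : volume (closedBall x ξ) ≠ ⊤ := measure_closedBall_lt_top.ne
    obtain ⟨y, -, hy⟩ := exists_le_setAverage h0 ht ((h1.add h2).add h3)
    have hsum : (⨍ y in closedBall x ξ,
        (((fun y => |J y - J x|) + fun y => |J' y - J y|) + fun y => |J' y - J' x|) y) =
        avgFlat0 d ξ J x + crossDisc0 d ξ J J' x + avgFlat0 d ξ J' x := by
      simp only [avgFlat0, crossDisc0, setAverage_eq, smul_eq_mul]
      rw [integral_add' (h1.add h2) h3, integral_add' h1 h2]
      ring
    rw [hsum] at hy
    simp only [Pi.add_apply] at hy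
    grind
  have hδ' : J' (x + δ) - J (x + δ) =
      (J' x - J x) + ((J' (x + δ) - J' x) - (J (x + δ) - J x)) := by ring
  unfold ATG
  rw [hδ']
  exact (abs_add_le _ _).trans (by gcongr)
end

section
/- Let d ≥ 1 and let J, J' : ℝ^d → ℝ be continuously differentiable. Fix x ∈ ℝ^d, ξ > 0, and δ ∈ ℝ^d with ‖δ‖ ≤ ξ. Then |ATG(x, δ)| ≤ [ R̄^{(0)}_ξ(x; J) + C_0(x) + R̄^{(0)}_ξ(x; J') ] + ‖δ‖ · [ R̄^{(1)}_ξ(x; J) + C_1(x) + R̄^{(1)}_ξ(x; J') ] + |R_1(x, δ; J') − R_1(x, δ; J)|, i.e., the first-order (N = 1) instance of the flatness-based transferability bound holds, where R_1(x, δ; J) = J(x + δ) − J(x) − ⟨∇J(x), δ⟩. -/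
/-!
For any points `x'` of the ball and `n ∈ {0, 1}`, the triangle inequality bounds
`‖Dⁿ J' x - Dⁿ J x‖` by `‖Dⁿ J x' - Dⁿ J x‖ + ‖Dⁿ J' x' - Dⁿ J x'‖ + ‖Dⁿ J' x' - Dⁿ J' x‖`.
The left side does not depend on `x'`, so averaging over the ball bounds it by the sum of the
two flatness terms and the discrepancy (`norm_sub_le_average_closedBall`). Expanding `J'` and
`J` to first order at `x` writes `ATG` as `(J' x - J x) + (D J' x - D J x) δ` plus the difference
of Taylor remainders, and the averaged bound applies to the first two terms.
-/

open MeasureTheory Metric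

/-- ξ-radius first-order average-case flatness:
`R̄^{(1)}_ξ(x; J) = E_{x' ~ Unif(B_ξ(x))} ‖D J(x') − D J(x)‖`. -/
noncomputable def avgFlat1 (d : ℕ) (ξ : ℝ)
    (J : EuclideanSpace ℝ (Fin d) → ℝ) (x : EuclideanSpace ℝ (Fin d)) : ℝ :=
  ⨍ x' in closedBall x ξ, ‖fderiv ℝ J x' - fderiv ℝ J x‖

/-- First-order cross-model discrepancy:
`C_1(x) = E_{x' ~ Unif(B_ξ(x))} ‖D J'(x') − D J(x')‖`. -/
noncomputable def crossDisc1 (d : ℕ) (ξ : ℝ)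
    (J J' : EuclideanSpace ℝ (Fin d) → ℝ) (x : EuclideanSpace ℝ (Fin d)) : ℝ :=
  ⨍ x' in closedBall x ξ, ‖fderiv ℝ J' x' - fderiv ℝ J x'‖

/-- First-order Taylor remainder
`R_1(x, δ; J) = J(x + δ) − J(x) − ⟨∇J(x), δ⟩`. -/
noncomputable def taylorRem1 (d : ℕ) (J : EuclideanSpace ℝ (Fin d) → ℝ)
    (x δ : EuclideanSpace ℝ (Fin d)) : ℝ :=
  J (x + δ) - J x - fderiv ℝ J x δ

/-- The averaged triangle inequality: the pointwise bound on the constant `‖G x - F x‖` survives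
averaging because the ball has positive finite measure and continuous functions are integrable
on it. -/
theorem norm_sub_le_average_closedBall {d : ℕ} {V : Type*} [NormedAddCommGroup V]
    {F G : EuclideanSpace ℝ (Fin d) → V} (hF : Continuous F) (hG : Continuous G)
    (x : EuclideanSpace ℝ (Fin d)) {ξ : ℝ} (hξ : 0 < ξ) :
    ‖G x - F x‖ ≤ (⨍ x' in closedBall x ξ, ‖F x' - F x‖) +
      (⨍ x' in closedBall x ξ, ‖G x' - F x'‖) + ⨍ x' in closedBall x ξ, ‖G x' - G x‖ := by
  have int : ∀ f : EuclideanSpace ℝ (Fin d) → ℝ, Continuous f →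
      IntegrableOn f (closedBall x ξ) volume := fun f hf =>
    hf.continuousOn.integrableOn_compact (isCompact_closedBall x ξ)
  have i1 := int (fun x' => ‖F x' - F x‖) (by fun_prop)
  have i2 := int (fun x' => ‖G x' - F x'‖) (by fun_prop)
  have i3 := int (fun x' => ‖G x' - G x‖) (by fun_prop)
  have i12 := int (fun x' => ‖F x' - F x‖ + ‖G x' - F x'‖) (by fun_prop)
  have h0 : volume (closedBall x ξ) ≠ 0 := (measure_closedBall_pos volume x hξ).ne'
  have htop : volume (closedBall x ξ) ≠ ⊤ := measure_closedBall_lt_top.ne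
  have hc : (⨍ _ in closedBall x ξ, ‖G x - F x‖) = ‖G x - F x‖ :=
    setAverage_const h0 htop _
  rw [← hc]
  simp only [setAverage_eq, smul_eq_mul]
  rw [← mul_add, ← mul_add, ← integral_add i1 i2, ← integral_add i12 i3]
  refine mul_le_mul_of_nonneg_left ?_ (by positivity)
  refine integral_mono (int _ continuous_const) (i12.add i3) fun x' => ?_
  have e : G x - F x = (F x' - F x) + (G x' - F x') - (G x' - G x) := by abel
  change ‖G x - F x‖ ≤ ‖F x' - F x‖ + ‖G x' - F x'‖ + ‖G x' - G x‖
  rw [e]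
  exact (norm_sub_le _ _).trans (by gcongr; exact norm_add_le _ _)

/-- First-order (N = 1) instance of the flatness-based transferability bound. -/
theorem flatness_transferability_bound_order_one
    {d : ℕ} (hd : 1 ≤ d)
    (J J' : EuclideanSpace ℝ (Fin d) → ℝ)
    (hJ : ContDiff ℝ 1 J) (hJ' : ContDiff ℝ 1 J')
    (x : EuclideanSpace ℝ (Fin d)) (ξ : ℝ) (hξ : 0 < ξ)
    (δ : EuclideanSpace ℝ (Fin d)) (hδ : ‖δ‖ ≤ ξ) :
    |ATG d J J' x δ| ≤
      (avgFlat0 d ξ J x + crossDisc0 d ξ J J' x + avgFlat0 d ξ J' x) +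
      ‖δ‖ * (avgFlat1 d ξ J x + crossDisc1 d ξ J J' x + avgFlat1 d ξ J' x) +
      |taylorRem1 d J' x δ - taylorRem1 d J x δ| := by
  have h0 : |J' x - J x| ≤ avgFlat0 d ξ J x + crossDisc0 d ξ J J' x + avgFlat0 d ξ J' x :=
    norm_sub_le_average_closedBall hJ.continuous hJ'.continuous x hξ
  have h1 : ‖fderiv ℝ J' x - fderiv ℝ J x‖ ≤
      avgFlat1 d ξ J x + crossDisc1 d ξ J J' x + avgFlat1 d ξ J' x :=
    norm_sub_le_average_closedBall (hJ.continuous_fderiv one_ne_zero)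
      (hJ'.continuous_fderiv one_ne_zero) x hξ
  have h2 : |(fderiv ℝ J' x - fderiv ℝ J x) δ| ≤
      ‖δ‖ * (avgFlat1 d ξ J x + crossDisc1 d ξ J J' x + avgFlat1 d ξ J' x) := by
    rw [mul_comm]
    exact ((fderiv ℝ J' x - fderiv ℝ J x).le_opNorm δ).trans (by gcongr)
  have e : ATG d J J' x δ = (J' x - J x) + (fderiv ℝ J' x - fderiv ℝ J x) δ +
      (taylorRem1 d J' x δ - taylorRem1 d J x δ) := by
    simp only [ATG, taylorRem1, sub_apply]
    ring
  rw [e]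
  exact (abs_add_three _ _ _).trans (by gcongr)
end

section
/- Let d ≥ 1, N ∈ ℕ, and let J, J' : ℝ^d → ℝ be N-times continuously differentiable. Fix x ∈ ℝ^d, ξ > 0, and δ ∈ ℝ^d with ‖δ‖ ≤ ξ. Then the transferability bound also holds with worst-case quantities: |ATG(x, δ)| ≤ Σ_{n=0}^{N} (‖δ‖^n / n!) · [ R̂^{(n)}_ξ(x; J) + Ĉ_n(x) + R̂^{(n)}_ξ(x; J') ] + |R_N(x, δ; J') − R_N(x, δ; J)|, where Ĉ_n(x) = sup_{x' ∈ B_ξ(x)} ‖D^n J'(x') − D^n J(x')‖. -/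
/-!
Subtracting the two Taylor expansions at `x` writes the gap as
`∑ n ≤ N, (1/n!) (D^n J'(x) − D^n J(x))[δ, …, δ] + (R_N(J') − R_N(J))`.
The operator norm bounds the `n`-th term by `‖δ‖^n / n! * ‖D^n J'(x) − D^n J(x)‖`, and the centre
`x` is itself a competitor in the supremum defining `Ĉ_n(x)`, which is finite by continuity on the
compact ball (`norm_sub_le_worstCrossDisc`). The two flatness terms are nonnegative
(`worstFlat_nonneg`), so adding them only weakens the bound.
-/

open MeasureTheory Metric

/-- ξ-radius n-th order worst-case flatness:
`R̂^{(n)}_ξ(x; J) = sup_{x' ∈ B_ξ(x)} ‖D^n J(x') − D^n J(x)‖`. -/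
noncomputable def worstFlat (d n : ℕ) (ξ : ℝ)
    (J : EuclideanSpace ℝ (Fin d) → ℝ) (x : EuclideanSpace ℝ (Fin d)) : ℝ :=
  sSup ((fun x' => ‖iteratedFDeriv ℝ n J x' - iteratedFDeriv ℝ n J x‖) ''
    closedBall x ξ)

/-- Worst-case cross-model discrepancy:
`Ĉ_n(x) = sup_{x' ∈ B_ξ(x)} ‖D^n J'(x') − D^n J(x')‖`. -/
noncomputable def worstCrossDisc (d n : ℕ) (ξ : ℝ)
    (J J' : EuclideanSpace ℝ (Fin d) → ℝ) (x : EuclideanSpace ℝ (Fin d)) : ℝ :=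
  sSup ((fun x' => ‖iteratedFDeriv ℝ n J' x' - iteratedFDeriv ℝ n J x'‖) ''
    closedBall x ξ)

lemma worstFlat_nonneg (d n : ℕ) (ξ : ℝ)
    (J : EuclideanSpace ℝ (Fin d) → ℝ) (x : EuclideanSpace ℝ (Fin d)) :
    0 ≤ worstFlat d n ξ J x := by
  refine Real.sSup_nonneg ?_
  rintro _ ⟨y, -, rfl⟩
  exact norm_nonneg _

lemma norm_sub_le_worstCrossDisc {d n : ℕ} {ξ : ℝ} (hξ : 0 ≤ ξ)
    {J J' : EuclideanSpace ℝ (Fin d) → ℝ} (hJ : ContDiff ℝ n J) (hJ' : ContDiff ℝ n J')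
    (x : EuclideanSpace ℝ (Fin d)) :
    ‖iteratedFDeriv ℝ n J' x - iteratedFDeriv ℝ n J x‖ ≤ worstCrossDisc d n ξ J J' x := by
  have hc : Continuous fun y => ‖iteratedFDeriv ℝ n J' y - iteratedFDeriv ℝ n J y‖ :=
    ((hJ'.continuous_iteratedFDeriv le_rfl).sub (hJ.continuous_iteratedFDeriv le_rfl)).norm
  exact le_csSup ((isCompact_closedBall x ξ).bddAbove_image hc.continuousOn)
    ⟨x, mem_closedBall_self hξ, rfl⟩

/-- Worst-case flatness-based bound on the adversarial transferability gap. -/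
theorem flatness_transferability_bound_worst_case
    {d : ℕ} (hd : 1 ≤ d) (N : ℕ)
    (J J' : EuclideanSpace ℝ (Fin d) → ℝ)
    (hJ : ContDiff ℝ N J) (hJ' : ContDiff ℝ N J')
    (x : EuclideanSpace ℝ (Fin d)) (ξ : ℝ) (hξ : 0 < ξ)
    (δ : EuclideanSpace ℝ (Fin d)) (hδ : ‖δ‖ ≤ ξ) :
    |ATG d J J' x δ| ≤
      (∑ n ∈ Finset.range (N + 1),
        (‖δ‖ ^ n / (n.factorial : ℝ)) *
          (worstFlat d n ξ J x + worstCrossDisc d n ξ J J' x +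
            worstFlat d n ξ J' x)) +
      |taylorRem d N J' x δ - taylorRem d N J x δ| := by
  have hsplit : ATG d J J' x δ =
      (∑ n ∈ Finset.range (N + 1), ((n.factorial : ℝ))⁻¹ *
        (iteratedFDeriv ℝ n J' x - iteratedFDeriv ℝ n J x) (fun _ => δ)) +
      (taylorRem d N J' x δ - taylorRem d N J x δ) := by
    simp only [ATG, taylorRem, sub_apply, mul_sub,
      Finset.sum_sub_distrib]
    ring
  rw [hsplit]
  refine (abs_add_le _ _).trans (add_le_add_left ?_ _)
  refine (Finset.abs_sum_le_sum_abs _ _).trans (Finset.sum_le_sum fun n hn => ?_)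
  have hnN : (n : WithTop ℕ∞) ≤ N := by
    exact_mod_cast Nat.lt_succ_iff.mp (Finset.mem_range.mp hn)
  have hop : |(iteratedFDeriv ℝ n J' x - iteratedFDeriv ℝ n J x) (fun _ => δ)| ≤
      ‖iteratedFDeriv ℝ n J' x - iteratedFDeriv ℝ n J x‖ * ‖δ‖ ^ n := by
    simpa using (iteratedFDeriv ℝ n J' x - iteratedFDeriv ℝ n J x).le_opNorm (fun _ => δ)
  have hcross := norm_sub_le_worstCrossDisc hξ.le (hJ.of_le hnN) (hJ'.of_le hnN) x
  have hflat := worstFlat_nonneg d n ξ J x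
  have hflat' := worstFlat_nonneg d n ξ J' x
  calc |((n.factorial : ℝ))⁻¹ *
        (iteratedFDeriv ℝ n J' x - iteratedFDeriv ℝ n J x) (fun _ => δ)|
      = ((n.factorial : ℝ))⁻¹ *
        |(iteratedFDeriv ℝ n J' x - iteratedFDeriv ℝ n J x) (fun _ => δ)| := by
        rw [abs_mul, abs_of_nonneg (by positivity)]
    _ ≤ ((n.factorial : ℝ))⁻¹ *
        (‖iteratedFDeriv ℝ n J' x - iteratedFDeriv ℝ n J x‖ * ‖δ‖ ^ n) := by gcongr
    _ = ‖δ‖ ^ n / (n.factorial : ℝ) *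
        ‖iteratedFDeriv ℝ n J' x - iteratedFDeriv ℝ n J x‖ := by ring
    _ ≤ _ := by
        gcongr
        linarith
end
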